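/- arXiv:1505.00977 — 4 statements merged into one kernel-verified Lean document; each statement's English description precedes it below -/
import Mathlib

section
/- Every almost additive sequence Φ = (φ_n)_n of continuous functions on a one-sided subshift of finite type (Σ,σ) is asymptotically additive. -/
open MeasureTheory Filter Topology Set

namespace WG

/-- The one-sided subshift of finite type determined by a 0-1 transition matrix `M`. -/
abbrev Space {k : ℕ} (M : Matrix (Fin k) (Fin k) ℕ) : Type :=
  {ω : ℕ → Fin k // ∀ i : ℕ, M (ω i) (ω (i + 1)) = 1}

variable {k : ℕ}

/-- The shift map on the subshift. -/
def shift (M : Matrix (Fin k) (Fin k) ℕ) (ω : Space M) : Space M :=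
  ⟨fun i => ω.1 (i + 1), fun i => ω.2 (i + 1)⟩

/-- `M` is a 0-1 matrix and the subshift is topologically mixing:
some power of `M` has all entries strictly positive. -/
def Mixing (M : Matrix (Fin k) (Fin k) ℕ) : Prop :=
  (∀ i j, M i j = 0 ∨ M i j = 1) ∧ ∃ l : ℕ, 0 < l ∧ ∀ i j, 0 < (M ^ l) i j

/-- The cylinder `C_{w₀ … w_{n-1}}`. -/
def cyl (M : Matrix (Fin k) (Fin k) ℕ) (n : ℕ) (w : Fin n → Fin k) : Set (Space M) :=
  {ω | ∀ j : Fin n, ω.1 j.1 = w j}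

/-- The initial word of length `n` of a point `ω`. -/
def word (M : Matrix (Fin k) (Fin k) ℕ) (n : ℕ) (ω : Space M) : Fin n → Fin k :=
  fun j => ω.1 j.1

/-- Birkhoff sums `S_n f`. -/
noncomputable def birk (M : Matrix (Fin k) (Fin k) ℕ) (f : Space M → ℝ) (n : ℕ)
    (ω : Space M) : ℝ :=
  ∑ j ∈ Finset.range n, f ((shift M)^[j] ω)

/-- The standard metric `d(ω,κ) = ∑ᵢ |ωᵢ - κᵢ| / 2^{i+1}` on the shift space. -/
noncomputable def dist' (M : Matrix (Fin k) (Fin k) ℕ) (ω κ : Space M) : ℝ :=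
  ∑' i : ℕ, |((ω.1 i : ℕ) : ℝ) - ((κ.1 i : ℕ) : ℝ)| / 2 ^ (i + 1)

/-- `E` is an `(n,ε)`-separated set. -/
def IsSep (M : Matrix (Fin k) (Fin k) ℕ) (n : ℕ) (ε : ℝ) (E : Finset (Space M)) : Prop :=
  ∀ ω ∈ E, ∀ κ ∈ E, ω ≠ κ → ∃ i < n, ε < dist' M ((shift M)^[i] ω) ((shift M)^[i] κ)

/-- `P(Φ, n, ε)`: supremum of `∑_{ω ∈ E} exp(φ_n ω)` over `(n,ε)`-separated sets `E`. -/
noncomputable def sepSum (M : Matrix (Fin k) (Fin k) ℕ) (Φ : ℕ → Space M → ℝ)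
    (n : ℕ) (ε : ℝ) : ℝ :=
  sSup {s | ∃ E : Finset (Space M), IsSep M n ε E ∧ s = ∑ ω ∈ E, Real.exp (Φ n ω)}

/-- `P` is the topological pressure of the sequence `Φ`:
`P = lim_{ε→0⁺} limsup_n (1/n) log P(Φ,n,ε)`. -/
def IsPressure (M : Matrix (Fin k) (Fin k) ℕ) (Φ : ℕ → Space M → ℝ) (P : ℝ) : Prop :=
  Tendsto (fun ε : ℝ => limsup (fun n : ℕ => Real.log (sepSum M Φ n ε) / n) atTop)
    (𝓝[>] (0 : ℝ)) (𝓝 P)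

/-- The sequence `Φ = (φ_n)` is asymptotically additive. -/
def AsympAdd (M : Matrix (Fin k) (Fin k) ℕ) (Φ : ℕ → Space M → ℝ) : Prop :=
  (∀ n, Continuous (Φ n)) ∧
  ∀ ε > (0 : ℝ), ∃ ρ : Space M → ℝ, Continuous ρ ∧
    limsup (fun n : ℕ => (⨆ ω : Space M, |Φ n ω - birk M ρ n ω|) / n) atTop < ε

/-- `μ` is a weak Gibbs measure for the sequence `Φ` with constant `P`. -/
def WeakGibbs (M : Matrix (Fin k) (Fin k) ℕ) (Φ : ℕ → Space M → ℝ) (P : ℝ)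
    (μ : Measure (Space M)) : Prop :=
  ∃ K : ℕ → ℝ, (∀ n, 0 < K n) ∧ Tendsto (fun n : ℕ => Real.log (K n) / n) atTop (𝓝 0) ∧
    ∀ n : ℕ, ∀ w : Fin n → Fin k, ∀ ω ∈ cyl M n w,
      1 / K n ≤ (μ (cyl M n w)).toReal / Real.exp (Φ n ω - n * P) ∧
      (μ (cyl M n w)).toReal / Real.exp (Φ n ω - n * P) ≤ K n

/-- `μ` is a Gibbs measure for the sequence `Φ` with constant `P`. -/
def Gibbs (M : Matrix (Fin k) (Fin k) ℕ) (Φ : ℕ → Space M → ℝ) (P : ℝ)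
    (μ : Measure (Space M)) : Prop :=
  ∃ K : ℝ, 0 < K ∧
    ∀ n : ℕ, ∀ w : Fin n → Fin k, ∀ ω ∈ cyl M n w,
      1 / K ≤ (μ (cyl M n w)).toReal / Real.exp (Φ n ω - n * P) ∧
      (μ (cyl M n w)).toReal / Real.exp (Φ n ω - n * P) ≤ K

/-- Sum of `exp(φ_n ω)` over points of period `n`. -/
noncomputable def perSum (M : Matrix (Fin k) (Fin k) ℕ) (Φ : ℕ → Space M → ℝ) (n : ℕ) : ℝ :=
  ∑' ω : {ω : Space M // (shift M)^[n] ω = ω}, Real.exp (Φ n ω.1)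

/-- `var_n(g)`: the variation of `g` over cylinders of length `n`. -/
noncomputable def varCyl (M : Matrix (Fin k) (Fin k) ℕ) (n : ℕ) (g : Space M → ℝ) : ℝ :=
  sSup {x | ∃ ω κ : Space M, (∀ j : Fin n, ω.1 j.1 = κ.1 j.1) ∧ x = |g ω - g κ|}

open Classical in
/-- `∑_{C ∈ Z_n} exp (sup_C S_n φ)`: the cylinder partition sum of `φ`. -/
noncomputable def cylSum (M : Matrix (Fin k) (Fin k) ℕ) (φ : Space M → ℝ) (n : ℕ) : ℝ :=
  ∑ w ∈ Finset.univ.filter (fun w : Fin n → Fin k => (cyl M n w).Nonempty),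
    Real.exp (sSup (birk M φ n '' cyl M n w))

end WG

namespace WGaux
open WG

theorem shift_compact {k : ℕ} (M : Matrix (Fin k) (Fin k) ℕ) : CompactSpace (Space M) := by
  apply isCompact_iff_compactSpace.mp
  apply IsClosed.isCompact
  have : {ω : ℕ → Fin k | ∀ i : ℕ, M (ω i) (ω (i + 1)) = 1}
      = ⋂ i : ℕ, (fun ω : ℕ → Fin k => M (ω i) (ω (i + 1))) ⁻¹' {1} := by
    ext ω; simp
  change IsClosed {ω : ℕ → Fin k | ∀ i : ℕ, M (ω i) (ω (i + 1)) = 1}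
  rw [this]
  refine isClosed_iInter fun i => IsClosed.preimage ?_ isClosed_singleton
  have h : Continuous (fun p : Fin k × Fin k => M p.1 p.2) := continuous_of_discreteTopology
  have h2 : Continuous (fun ω : ℕ → Fin k => (ω i, ω (i + 1))) := by fun_prop
  exact Continuous.comp (g := fun p : Fin k × Fin k => M p.1 p.2) h h2

theorem sum_swap (a : ℕ → ℝ) (N n : ℕ) :
    ∑ j ∈ Finset.range n, (a (j + N) - a j) = ∑ j ∈ Finset.range N, (a (n + j) - a j) := by
  have h1 := Finset.sum_range_add a N n
  have h2 := Finset.sum_range_add a n N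
  rw [Finset.sum_sub_distrib, Finset.sum_sub_distrib]
  rw [add_comm N n] at h1
  have h3 : ∑ j ∈ Finset.range n, a (j + N) = ∑ j ∈ Finset.range n, a (N + j) :=
    Finset.sum_congr rfl fun j _ => by rw [add_comm]
  linarith

theorem key {k : ℕ} (M : Matrix (Fin k) (Fin k) ℕ)
    (Φ : ℕ → Space M → ℝ) (C : ℝ) (h : ∀ n m : ℕ, ∀ ω : Space M,
      -C + Φ n ω + Φ m ((shift M)^[n] ω) ≤ Φ (n + m) ω ∧
        Φ (n + m) ω ≤ C + Φ n ω + Φ m ((shift M)^[n] ω))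
    (B : ℕ → ℝ) (hB : ∀ n ω, |Φ n ω| ≤ B n) (N n : ℕ) (ω : Space M) :
    |N * Φ n ω - ∑ j ∈ Finset.range n, Φ N ((shift M)^[j] ω)|
      ≤ n * C + (N * C + 2 * ∑ j ∈ Finset.range N, B j) := by
  have h1 : |∑ j ∈ Finset.range n, ((Φ (j + N) ω - Φ j ω) - Φ N ((shift M)^[j] ω))| ≤ n * C := by
    refine (Finset.abs_sum_le_sum_abs _ _).trans ?_
    refine (Finset.sum_le_card_nsmul _ _ C fun j _ => ?_).trans (by simp)
    have := h j N ω
    rw [abs_le]; constructor <;> linarith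
  have h2 : |∑ j ∈ Finset.range N, ((Φ (n + j) ω - Φ j ω) - Φ n ω)|
      ≤ ∑ j ∈ Finset.range N, (C + 2 * B j) := by
    refine (Finset.abs_sum_le_sum_abs _ _).trans (Finset.sum_le_sum fun j _ => ?_)
    have := h n j ω
    have h3 := abs_le.mp (hB j ω)
    have h4 := abs_le.mp (hB j ((shift M)^[n] ω))
    rw [abs_le]; constructor <;> linarith
  rw [Finset.sum_sub_distrib, sum_swap (fun j => Φ j ω)] at h1
  rw [Finset.sum_sub_distrib] at h2
  rw [Finset.sum_add_distrib, ← Finset.mul_sum] at h2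
  simp only [Finset.sum_const, Finset.card_range, nsmul_eq_mul] at h2
  rw [abs_le] at h1 h2 ⊢
  constructor <;> linarith

end WGaux

open WG in
/-- every almost additive sequence of continuous functions on a one-sided
subshift of finite type is asymptotically additive. -/
theorem almostAdd_asympAdd
    {k : ℕ} (M : Matrix (Fin k) (Fin k) ℕ)
    (Φ : ℕ → Space M → ℝ) (hcont : ∀ n, Continuous (Φ n))
    (halm : ∃ C > (0 : ℝ), ∀ n m : ℕ, ∀ ω : Space M,
      -C + Φ n ω + Φ m ((shift M)^[n] ω) ≤ Φ (n + m) ω ∧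
        Φ (n + m) ω ≤ C + Φ n ω + Φ m ((shift M)^[n] ω)) :
    AsympAdd M Φ := by
  obtain ⟨C, hC, h⟩ := halm
  refine ⟨hcont, fun ε hε => ?_⟩
  haveI := WGaux.shift_compact M
  have hb : ∀ n, ∃ B : ℝ, ∀ ω, |Φ n ω| ≤ B := by
    intro n
    obtain ⟨B, hB⟩ := isCompact_univ.exists_bound_of_continuousOn (hcont n).continuousOn
    exact ⟨B, fun ω => hB ω (mem_univ _)⟩
  choose B hB using hb
  obtain ⟨N, hN⟩ := exists_nat_gt (2 * C / ε)
  have hN0 : (0 : ℝ) < N := lt_trans (by positivity) hN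
  refine ⟨fun ω => Φ N ω / N, (hcont N).div_const _, ?_⟩
  set D : ℝ := N * C + 2 * ∑ j ∈ Finset.range N, B j with hD
  have hCN : C / N < ε / 2 := by
    rw [div_lt_iff₀ hε] at hN
    rw [div_lt_iff₀ hN0]; linarith
  have hlim : Tendsto (fun n : ℕ => (D / N) / (n : ℝ)) atTop (𝓝 0) :=
    tendsto_const_div_atTop_nhds_zero_nat _
  have hev : ∀ᶠ n : ℕ in atTop, (D / N) / (n : ℝ) < ε / 4 :=
    hlim.eventually_lt_const (by positivity)
  have hle : limsup (fun n : ℕ =>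
      (⨆ ω : Space M, |Φ n ω - birk M (fun ω => Φ N ω / N) n ω|) / n) atTop ≤ 3 * ε / 4 := by
    refine limsup_le_of_le ?_ ?_
    · refine IsCoboundedUnder.of_frequently_ge (a := 0) (Eventually.frequently ?_)
      exact Eventually.of_forall fun n =>
        div_nonneg (Real.iSup_nonneg fun ω => abs_nonneg _) (Nat.cast_nonneg n)
    · filter_upwards [hev, eventually_gt_atTop 0] with n hn hn0
      have hn0' : (0 : ℝ) < n := by exact_mod_cast hn0
      rw [div_lt_iff₀ hn0'] at hn
      rw [div_le_iff₀ hn0']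
      refine Real.iSup_le (fun ω => ?_) (by positivity)
      have hk := WGaux.key M Φ C h B hB N n ω
      have he : Φ n ω - birk M (fun ω => Φ N ω / N) n ω
          = (N * Φ n ω - ∑ j ∈ Finset.range n, Φ N ((shift M)^[j] ω)) / N := by
        unfold birk
        rw [← Finset.sum_div]
        field_simp
      rw [he, abs_div, abs_of_pos hN0]
      calc _ ≤ (n * C + D) / N := by gcongr
        _ = C / N * n + D / N := by ring
        _ ≤ ε / 2 * n + ε / 4 * n := by gcongr
        _ = 3 * ε / 4 * n := by ring
  linarith
end

section
/- Every weak Gibbs measure μ for a continuous potential φ : Σ → ℝ on a topologically mixing one-sided subshift of finite type (Σ,σ) is a Gibbs measure for some asymptotically additive sequence Ψ = (ψ_n)_n on Σ. -/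
open MeasureTheory Filter Topology Set

theorem aux_le {a b : ℕ → ℝ} (h : Tendsto (fun n => a n - b n) atTop (𝓝 0)) (x ε : ℝ)
    (hε : 0 < ε) (hx : ∀ᶠ n in atTop, a n ≤ x) : ∀ᶠ n in atTop, b n ≤ x + ε := by
  have h2 := h.eventually (lt_mem_nhds (show -ε < 0 by linarith))
  filter_upwards [hx, h2] with n h1 h2
  linarith

theorem aux_bdd {a b : ℕ → ℝ} (h : Tendsto (fun n => a n - b n) atTop (𝓝 0))
    (hb : BddBelow {x | ∀ᶠ n in atTop, b n ≤ x}) : BddBelow {x | ∀ᶠ n in atTop, a n ≤ x} := by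
  obtain ⟨c, hc⟩ := hb
  refine ⟨c - 1, fun x hx => ?_⟩
  have := hc (aux_le h x 1 one_pos hx)
  linarith

theorem aux_sInf {a b : ℕ → ℝ} (h : Tendsto (fun n => a n - b n) atTop (𝓝 0))
    (hb : BddBelow {x | ∀ᶠ n in atTop, b n ≤ x}) (hne : {x | ∀ᶠ n in atTop, a n ≤ x}.Nonempty) :
    sInf {x | ∀ᶠ n in atTop, b n ≤ x} ≤ sInf {x | ∀ᶠ n in atTop, a n ≤ x} := by
  apply le_csInf hne
  intro x hx
  apply le_of_forall_pos_le_add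
  intro ε hε
  exact csInf_le hb (aux_le h x ε hε hx)

theorem aux_limsup {a b : ℕ → ℝ} (h : Tendsto (fun n => a n - b n) atTop (𝓝 0)) :
    limsup a atTop = limsup b atTop := by
  have h' : Tendsto (fun n => b n - a n) atTop (𝓝 0) := by simpa using h.neg
  rw [limsup_eq, limsup_eq]
  by_cases hne : {x | ∀ᶠ n in atTop, a n ≤ x}.Nonempty
  · have hne' : {x | ∀ᶠ n in atTop, b n ≤ x}.Nonempty := by
      obtain ⟨x, hx⟩ := hne
      exact ⟨x + 1, aux_le h x 1 one_pos hx⟩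
    by_cases hb : BddBelow {x | ∀ᶠ n in atTop, a n ≤ x}
    · exact le_antisymm (aux_sInf h' hb hne') (aux_sInf h (aux_bdd h' hb) hne)
    · rw [Real.sInf_of_not_bddBelow hb, Real.sInf_of_not_bddBelow (fun hc => hb (aux_bdd h hc))]
  · have hne' : ¬ {x | ∀ᶠ n in atTop, b n ≤ x}.Nonempty := by
      rintro ⟨x, hx⟩
      exact hne ⟨x + 1, aux_le h' x 1 one_pos hx⟩
    rw [Set.not_nonempty_iff_eq_empty] at hne hne'
    rw [hne, hne']

open WG in
theorem aux_sumle {k : ℕ} {M : Matrix (Fin k) (Fin k) ℕ} {f g : ℕ → Space M → ℝ} {n : ℕ} {c : ℝ}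
    (h : ∀ ω, f n ω ≤ g n ω + c) (E : Finset (Space M)) :
    ∑ ω ∈ E, Real.exp (f n ω) ≤ Real.exp c * ∑ ω ∈ E, Real.exp (g n ω) := by
  rw [Finset.mul_sum]
  apply Finset.sum_le_sum
  intro ω _
  rw [← Real.exp_add]
  exact Real.exp_le_exp.2 (by linarith [h ω])

open WG in
theorem aux_sepbdd {k : ℕ} {M : Matrix (Fin k) (Fin k) ℕ} {f g : ℕ → Space M → ℝ} {n : ℕ} {c : ℝ}
    (h : ∀ ω, f n ω ≤ g n ω + c) (ε : ℝ)
    (hb : BddAbove {s | ∃ E : Finset (Space M), IsSep M n ε E ∧ s = ∑ ω ∈ E, Real.exp (g n ω)}) :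
    BddAbove {s | ∃ E : Finset (Space M), IsSep M n ε E ∧ s = ∑ ω ∈ E, Real.exp (f n ω)} := by
  obtain ⟨B, hB⟩ := hb
  refine ⟨Real.exp c * B, ?_⟩
  rintro s ⟨E, hE, rfl⟩
  exact (aux_sumle h E).trans (mul_le_mul_of_nonneg_left (hB ⟨E, hE, rfl⟩) (Real.exp_pos c).le)

open WG in
theorem aux_seppos {k : ℕ} {M : Matrix (Fin k) (Fin k) ℕ} [Nonempty (Space M)]
    {f : ℕ → Space M → ℝ} {n : ℕ} (ε : ℝ)
    (hb : BddAbove {s | ∃ E : Finset (Space M), IsSep M n ε E ∧ s = ∑ ω ∈ E, Real.exp (f n ω)}) :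
    0 < sepSum M f n ε := by
  obtain ⟨ω⟩ := ‹Nonempty (Space M)›
  refine lt_of_lt_of_le (Real.exp_pos (f n ω)) (le_csSup hb ⟨{ω}, ?_, by simp⟩)
  intro a ha b hb hab
  simp only [Finset.mem_singleton] at ha hb
  exact absurd (ha.trans hb.symm) hab

open WG in
theorem aux_seple {k : ℕ} {M : Matrix (Fin k) (Fin k) ℕ} [Nonempty (Space M)]
    {f g : ℕ → Space M → ℝ} {n : ℕ} {c : ℝ}
    (h : ∀ ω, f n ω ≤ g n ω + c) (ε : ℝ)
    (hb : BddAbove {s | ∃ E : Finset (Space M), IsSep M n ε E ∧ s = ∑ ω ∈ E, Real.exp (g n ω)}) :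
    Real.log (sepSum M f n ε) ≤ c + Real.log (sepSum M g n ε) := by
  have hp := aux_seppos ε hb
  have hq := aux_seppos ε (aux_sepbdd h ε hb)
  have : sepSum M f n ε ≤ Real.exp c * sepSum M g n ε := by
    apply csSup_le
    · exact ⟨_, ∅, by intro a ha; simp at ha, rfl⟩
    · rintro s ⟨E, hE, rfl⟩
      exact (aux_sumle h E).trans
        (mul_le_mul_of_nonneg_left (le_csSup hb ⟨E, hE, rfl⟩) (Real.exp_pos c).le)
  have h3 := Real.log_le_log hq this
  rwa [Real.log_mul (Real.exp_pos c).ne' hp.ne', Real.log_exp] at h3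

open WG in
theorem aux_sepabs {k : ℕ} {M : Matrix (Fin k) (Fin k) ℕ} [Nonempty (Space M)]
    {f g : ℕ → Space M → ℝ} {n : ℕ} {c : ℝ} (hc : 0 ≤ c)
    (h : ∀ ω, |f n ω - g n ω| ≤ c) (ε : ℝ) :
    |Real.log (sepSum M f n ε) - Real.log (sepSum M g n ε)| ≤ c := by
  have h1 : ∀ ω, f n ω ≤ g n ω + c := fun ω => by linarith [(abs_le.1 (h ω)).2]
  have h2 : ∀ ω, g n ω ≤ f n ω + c := fun ω => by linarith [(abs_le.1 (h ω)).1]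
  by_cases hb : BddAbove {s | ∃ E : Finset (Space M), IsSep M n ε E ∧
      s = ∑ ω ∈ E, Real.exp (g n ω)}
  · have := aux_seple h1 ε hb
    have := aux_seple h2 ε (aux_sepbdd h1 ε hb)
    rw [abs_le]
    constructor <;> linarith
  · have hb' := fun hc => hb (aux_sepbdd h2 ε hc)
    unfold sepSum
    rw [Real.sSup_of_not_bddAbove hb, Real.sSup_of_not_bddAbove hb']
    simpa using hc

open WG in
/-- every weak Gibbs measure for a continuous potential `φ` on a
topologically mixing subshift of finite type is a Gibbs measure for some asymptotically
additive sequence `Ψ`. -/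
theorem weakGibbs_potential_is_gibbs_for_asympAdd
    {k : ℕ} (M : Matrix (Fin k) (Fin k) ℕ) (hmix : Mixing M)
    (φ : Space M → ℝ) (hφ : Continuous φ)
    (P : ℝ) (hP : IsPressure M (fun n => birk M φ n) P)
    (μ : Measure (Space M)) (hμ : IsProbabilityMeasure μ)
    (hwg : WeakGibbs M (fun n => birk M φ n) P μ) :
    ∃ Ψ : ℕ → Space M → ℝ, AsympAdd M Ψ ∧ ∃ Q : ℝ, IsPressure M Ψ Q ∧ Gibbs M Ψ Q μ := by
  
  obtain ⟨K, hK, hlim, hG⟩ := hwg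
  haveI : Nonempty (Space M) := by
    by_contra hne
    rw [not_nonempty_iff] at hne
    have h1 := hμ.measure_univ
    rw [Set.univ_eq_empty_iff.2 hne, measure_empty] at h1
    exact zero_ne_one h1
  have hmem : ∀ n (ω : Space M), ω ∈ cyl M n (word M n ω) := fun n ω j => rfl
  have hpos : ∀ n (ω : Space M), 0 < (μ (cyl M n (word M n ω))).toReal := by
    intro n ω
    have h1 := (hG n _ ω (hmem n ω)).1
    have h2 : 0 < 1 / K n := one_div_pos.2 (hK n)
    exact (div_pos_iff_of_pos_right (Real.exp_pos _)).1 (h2.trans_le h1)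
  set Ψ : ℕ → Space M → ℝ :=
    fun n ω => Real.log (μ (cyl M n (word M n ω))).toReal + n * P with hΨ
  have habs : ∀ n ω, |Ψ n ω - birk M φ n ω| ≤ Real.log (K n) := by
    intro n ω
    obtain ⟨h1, h2⟩ := hG n _ ω (hmem n ω)
    have hq := div_pos (hpos n ω) (Real.exp_pos (birk M φ n ω - n * P))
    have h3 := Real.log_le_log (one_div_pos.2 (hK n)) h1
    have h4 := Real.log_le_log hq h2
    rw [Real.log_div (hpos n ω).ne' (Real.exp_pos _).ne', Real.log_exp] at h3 h4
    rw [one_div, Real.log_inv] at h3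
    simp only [hΨ]
    rw [abs_le]
    constructor <;> linarith
  have hK0 : ∀ n, 0 ≤ Real.log (K n) := fun n =>
    (abs_nonneg _).trans (habs n (Classical.arbitrary _))
  refine ⟨Ψ, ⟨fun n => ?_, fun ε hε => ⟨φ, hφ, ?_⟩⟩, P, ?_, 1, one_pos, ?_⟩
  · have hw : Continuous (word M n) :=
      continuous_pi fun j => (continuous_apply j.1).comp continuous_subtype_val
    exact (continuous_of_discreteTopology
      (f := fun w : Fin n → Fin k => Real.log (μ (cyl M n w)).toReal + n * P)).comp hw
  · have : Tendsto (fun n : ℕ => (⨆ ω : Space M, |Ψ n ω - birk M φ n ω|) / n) atTop (𝓝 0) := by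
      refine squeeze_zero (fun n => ?_) (fun n => ?_) hlim
      · exact div_nonneg (Real.iSup_nonneg fun ω => abs_nonneg _) (Nat.cast_nonneg n)
      · exact div_le_div_of_nonneg_right (ciSup_le (habs n)) (Nat.cast_nonneg n)
    rw [this.limsup_eq]
    exact hε
  · unfold IsPressure at hP ⊢
    convert hP using 2 with ε
    apply aux_limsup
    refine squeeze_zero_norm (fun n => ?_) hlim
    rw [Real.norm_eq_abs, ← sub_div, abs_div, Nat.abs_cast]
    exact div_le_div_of_nonneg_right
      (aux_sepabs (f := Ψ) (g := fun n => birk M φ n) (hK0 n) (habs n) ε) (Nat.cast_nonneg n)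
  · intro n w ω hω
    have hw : w = word M n ω := funext fun j => (hω j).symm
    subst hw
    have : Ψ n ω - n * P = Real.log (μ (cyl M n (word M n ω))).toReal := by simp [hΨ]
    rw [this, Real.exp_log (hpos n ω), div_self (hpos n ω).ne']
    simp
end

section
/- Let μ be a weak Gibbs measure for an almost additive sequence Φ = (φ_n)_n of continuous functions on a topologically mixing one-sided subshift of finite type (Σ,σ). Then there exists an asymptotically additive sequence Ψ = (ψ_n)_n on Σ such that μ is a Gibbs measure for Ψ. -/
open MeasureTheory Filter Topology Set

namespace WG

section Aux

variable {k : ℕ}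

lemma limsup_aux_set {u v : ℕ → ℝ} (h : Tendsto (fun n => v n - u n) atTop (𝓝 0)) {e : ℝ}
    (he : 0 < e) {a : ℝ} (ha : ∀ᶠ n in atTop, u n ≤ a) : ∀ᶠ n in atTop, v n ≤ a + e := by
  have h2 := h.eventually (Iio_mem_nhds he)
  filter_upwards [ha, h2] with n h1 h2
  have : v n - u n < e := h2
  linarith

lemma limsup_aux_le {u v : ℕ → ℝ} (h : Tendsto (fun n => v n - u n) atTop (𝓝 0))
    (hb : BddBelow {a | ∀ᶠ n in atTop, v n ≤ a}) (hne : {a | ∀ᶠ n in atTop, u n ≤ a}.Nonempty) :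
    limsup v atTop ≤ limsup u atTop := by
  rw [limsup_eq, limsup_eq]
  refine le_of_forall_pos_le_add fun e he => ?_
  rw [← sub_le_iff_le_add]
  refine le_csInf hne fun a ha => ?_
  rw [sub_le_iff_le_add]
  exact csInf_le hb (limsup_aux_set h he ha)

lemma limsup_aux {u v : ℕ → ℝ} (h : Tendsto (fun n => v n - u n) atTop (𝓝 0)) :
    limsup v atTop = limsup u atTop := by
  have h' : Tendsto (fun n => u n - v n) atTop (𝓝 0) := by
    simpa using h.neg
  have hb : ∀ {u v : ℕ → ℝ}, Tendsto (fun n => v n - u n) atTop (𝓝 0) →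
      BddBelow {a | ∀ᶠ n in atTop, v n ≤ a} → BddBelow {a | ∀ᶠ n in atTop, u n ≤ a} := by
    rintro u v h ⟨b, hb⟩
    refine ⟨b - 1, fun a ha => ?_⟩
    have := hb (limsup_aux_set h one_pos ha)
    linarith
  have hn : ∀ {u v : ℕ → ℝ}, Tendsto (fun n => v n - u n) atTop (𝓝 0) →
      {a | ∀ᶠ n in atTop, u n ≤ a}.Nonempty → {a | ∀ᶠ n in atTop, v n ≤ a}.Nonempty := by
    rintro u v h ⟨a, ha⟩
    exact ⟨a + 1, limsup_aux_set h one_pos ha⟩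
  by_cases h1 : {a | ∀ᶠ n in atTop, u n ≤ a}.Nonempty
  · by_cases h2 : BddBelow {a | ∀ᶠ n in atTop, u n ≤ a}
    · exact le_antisymm (limsup_aux_le h (hb h' h2) h1) (limsup_aux_le h' h2 (hn h h1))
    · have h3 : ¬ BddBelow {a | ∀ᶠ n in atTop, v n ≤ a} := fun h3 => h2 (hb h h3)
      rw [limsup_eq, limsup_eq, Real.sInf_of_not_bddBelow h2, Real.sInf_of_not_bddBelow h3]
  · have h3 : ¬ {a | ∀ᶠ n in atTop, v n ≤ a}.Nonempty := fun h3 => h1 (hn h' h3)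
    rw [not_nonempty_iff_eq_empty] at h1 h3
    rw [limsup_eq, limsup_eq, h1, h3]

lemma sum_aux (M : Matrix (Fin k) (Fin k) ℕ) {f g : Space M → ℝ} {L : ℝ}
    (h : ∀ ω, g ω ≤ f ω + L) (E : Finset (Space M)) :
    ∑ ω ∈ E, Real.exp (g ω) ≤ Real.exp L * ∑ ω ∈ E, Real.exp (f ω) := by
  rw [Finset.mul_sum]
  refine Finset.sum_le_sum fun ω _ => ?_
  rw [← Real.exp_add]
  exact Real.exp_le_exp.2 (by linarith [h ω])

lemma sepSum_bdd (M : Matrix (Fin k) (Fin k) ℕ) {Φ Ψ : ℕ → Space M → ℝ} {L : ℝ} {n : ℕ} {ε : ℝ}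
    (h : ∀ ω, Ψ n ω ≤ Φ n ω + L)
    (hb : BddAbove {s | ∃ E : Finset (Space M), IsSep M n ε E ∧ s = ∑ ω ∈ E, Real.exp (Φ n ω)}) :
    BddAbove {s | ∃ E : Finset (Space M), IsSep M n ε E ∧ s = ∑ ω ∈ E, Real.exp (Ψ n ω)} := by
  obtain ⟨b, hb⟩ := hb
  refine ⟨Real.exp L * b, ?_⟩
  rintro s ⟨E, hE, rfl⟩
  exact (sum_aux M h E).trans (mul_le_mul_of_nonneg_left (hb ⟨E, hE, rfl⟩) (Real.exp_pos _).le)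

lemma sepSum_pos (M : Matrix (Fin k) (Fin k) ℕ) [Nonempty (Space M)] {Φ : ℕ → Space M → ℝ}
    {n : ℕ} {ε : ℝ}
    (hb : BddAbove {s | ∃ E : Finset (Space M), IsSep M n ε E ∧ s = ∑ ω ∈ E, Real.exp (Φ n ω)}) :
    0 < sepSum M Φ n ε := by
  obtain ⟨ω⟩ := ‹Nonempty (Space M)›
  refine lt_of_lt_of_le (Real.exp_pos (Φ n ω)) (le_csSup hb ⟨{ω}, ?_, by simp⟩)
  intro a ha b hb hab
  simp only [Finset.mem_singleton] at ha hb
  exact absurd (ha.trans hb.symm) hab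

lemma sepSum_le (M : Matrix (Fin k) (Fin k) ℕ) [Nonempty (Space M)] {Φ Ψ : ℕ → Space M → ℝ}
    {L : ℝ} {n : ℕ} {ε : ℝ} (h : ∀ ω, Ψ n ω ≤ Φ n ω + L)
    (hb : BddAbove {s | ∃ E : Finset (Space M), IsSep M n ε E ∧ s = ∑ ω ∈ E, Real.exp (Φ n ω)}) :
    Real.log (sepSum M Ψ n ε) ≤ Real.log (sepSum M Φ n ε) + L := by
  have hle : sepSum M Ψ n ε ≤ Real.exp L * sepSum M Φ n ε := by
    refine csSup_le ⟨0, ∅, ?_, by simp⟩ ?_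
    · intro a ha
      simp at ha
    · rintro s ⟨E, hE, rfl⟩
      exact (sum_aux M h E).trans
        (mul_le_mul_of_nonneg_left (le_csSup hb ⟨E, hE, rfl⟩) (Real.exp_pos _).le)
  have := Real.log_le_log (sepSum_pos M (sepSum_bdd M h hb)) hle
  rw [Real.log_mul (Real.exp_pos _).ne' (sepSum_pos M hb).ne', Real.log_exp] at this
  linarith

lemma sepSum_abs (M : Matrix (Fin k) (Fin k) ℕ) [hne : Nonempty (Space M)] {Φ Ψ : ℕ → Space M → ℝ}
    {L : ℝ} {n : ℕ} {ε : ℝ} (h : ∀ ω, |Ψ n ω - Φ n ω| ≤ L) :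
    |Real.log (sepSum M Ψ n ε) - Real.log (sepSum M Φ n ε)| ≤ L := by
  have h1 : ∀ ω, Ψ n ω ≤ Φ n ω + L := fun ω => by linarith [(abs_le.1 (h ω)).2]
  have h2 : ∀ ω, Φ n ω ≤ Ψ n ω + L := fun ω => by linarith [(abs_le.1 (h ω)).1]
  by_cases hb : BddAbove
    {s | ∃ E : Finset (Space M), IsSep M n ε E ∧ s = ∑ ω ∈ E, Real.exp (Φ n ω)}
  · have h3 := sepSum_le M h1 hb
    have h4 := sepSum_le M h2 (sepSum_bdd M h1 hb)
    rw [abs_le]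
    constructor <;> linarith
  · have hb' : ¬ BddAbove
      {s | ∃ E : Finset (Space M), IsSep M n ε E ∧ s = ∑ ω ∈ E, Real.exp (Ψ n ω)} :=
      fun h5 => hb (sepSum_bdd M h2 h5)
    rw [sepSum, sepSum, Real.sSup_of_not_bddAbove hb, Real.sSup_of_not_bddAbove hb']
    obtain ⟨ω⟩ := hne
    simpa using (abs_nonneg _).trans (h ω)

lemma compact_space (M : Matrix (Fin k) (Fin k) ℕ) : CompactSpace (Space M) := by
  refine (isCompact_iff_compactSpace
    (s := {ω : ℕ → Fin k | ∀ i : ℕ, M (ω i) (ω (i + 1)) = 1})).1 ?_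
  refine IsClosed.isCompact ?_
  rw [Set.ofPred_forall]
  refine isClosed_iInter fun i => ?_
  have h1 : Continuous (fun p : Fin k × Fin k => M p.1 p.2) := continuous_of_discreteTopology
  have h2 : Continuous (fun ω : ℕ → Fin k => (ω i, ω (i + 1))) :=
    (continuous_apply i).prodMk (continuous_apply (i + 1))
  have : Continuous (fun ω : ℕ → Fin k => M (ω i) (ω (i + 1))) := h1.comp h2
  exact isClosed_eq this continuous_const

lemma sum_shift_aux (a : ℕ → ℝ) (n m : ℕ) :
    ∑ j ∈ Finset.range n, (a (j + m) - a j) =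
      ∑ i ∈ Finset.range m, a (n + i) - ∑ i ∈ Finset.range m, a i := by
  have h1 := Finset.sum_range_add a n m
  have h2 := Finset.sum_range_add a m n
  rw [add_comm m n] at h2
  rw [Finset.sum_sub_distrib]
  have h3 : ∑ j ∈ Finset.range n, a (j + m) = ∑ j ∈ Finset.range n, a (m + j) :=
    Finset.sum_congr rfl fun j _ => by rw [add_comm]
  linarith

lemma almost_aux (M : Matrix (Fin k) (Fin k) ℕ) (Φ : ℕ → Space M → ℝ) {C : ℝ}
    (h : ∀ n m : ℕ, ∀ ω : Space M, |Φ (n + m) ω - Φ n ω - Φ m ((shift M)^[n] ω)| ≤ C)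
    (B : ℕ → ℝ) (hB : ∀ n ω, |Φ n ω| ≤ B n) (n m : ℕ) (ω : Space M) :
    |m * Φ n ω - birk M (Φ m) n ω| ≤ n * C + m * C + 2 * ∑ i ∈ Finset.range m, B i := by
  have key : m * Φ n ω - birk M (Φ m) n ω =
      ∑ j ∈ Finset.range n, (Φ (j + m) ω - Φ j ω - Φ m ((shift M)^[j] ω))
      - ∑ i ∈ Finset.range m, (Φ (n + i) ω - Φ n ω - Φ i ((shift M)^[n] ω))
      - ∑ i ∈ Finset.range m, Φ i ((shift M)^[n] ω) + ∑ i ∈ Finset.range m, Φ i ω := by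
    have := sum_shift_aux (fun i => Φ i ω) n m
    simp only [Finset.sum_sub_distrib, birk, Finset.sum_const, Finset.card_range,
      nsmul_eq_mul] at this ⊢
    linarith
  have b1 : |∑ j ∈ Finset.range n, (Φ (j + m) ω - Φ j ω - Φ m ((shift M)^[j] ω))| ≤ n * C := by
    refine (Finset.abs_sum_le_sum_abs _ _).trans ((Finset.sum_le_sum fun j _ => h j m ω).trans ?_)
    simp
  have b2 : |∑ i ∈ Finset.range m, (Φ (n + i) ω - Φ n ω - Φ i ((shift M)^[n] ω))| ≤ m * C := by
    refine (Finset.abs_sum_le_sum_abs _ _).trans ((Finset.sum_le_sum fun j _ => h n j ω).trans ?_)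
    simp
  have b3 : ∀ κ, |∑ i ∈ Finset.range m, Φ i κ| ≤ ∑ i ∈ Finset.range m, B i := fun κ =>
    (Finset.abs_sum_le_sum_abs _ _).trans (Finset.sum_le_sum fun i _ => hB i κ)
  rw [key]
  have b4 := b3 ω
  have b5 := b3 ((shift M)^[n] ω)
  rw [abs_le] at *
  constructor <;> linarith

lemma asymp_aux (M : Matrix (Fin k) (Fin k) ℕ) [Nonempty (Space M)] (Φ Ψ : ℕ → Space M → ℝ)
    (hΨ : ∀ n, Continuous (Ψ n)) (hcont : ∀ n, Continuous (Φ n)) {C : ℝ} (hC : 0 < C)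
    (h : ∀ n m : ℕ, ∀ ω : Space M, |Φ (n + m) ω - Φ n ω - Φ m ((shift M)^[n] ω)| ≤ C)
    (L : ℕ → ℝ) (hL : Tendsto (fun n : ℕ => L n / n) atTop (𝓝 0))
    (hd : ∀ n ω, |Ψ n ω - Φ n ω| ≤ L n) : AsympAdd M Ψ := by
  haveI := compact_space M
  refine ⟨hΨ, fun ε hε => ?_⟩
  have hB : ∀ n, ∃ b, ∀ ω, |Φ n ω| ≤ b := fun n => by
    obtain ⟨b, hb⟩ := isCompact_univ.exists_bound_of_continuousOn (hcont n).continuousOn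
    exact ⟨b, fun ω => hb ω (mem_univ _)⟩
  choose B hB using hB
  obtain ⟨m, hm⟩ := exists_nat_gt (C / (ε / 2))
  have hm0 : (0 : ℝ) < m := lt_trans (by positivity) hm
  have hmC : C / m < ε / 2 := by
    rw [div_lt_iff₀ (by positivity)] at hm ⊢
    linarith
  set D : ℝ := (m * C + 2 * ∑ i ∈ Finset.range m, B i) / m with hD
  refine ⟨fun ω => Φ m ω / m, (hcont m).div_const _, ?_⟩
  have hbirk : ∀ n ω, birk M (fun ω => Φ m ω / m) n ω = birk M (Φ m) n ω / m := fun n ω => by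
    simp only [birk, Finset.sum_div]
  have hbd : ∀ n ω, |Ψ n ω - birk M (fun ω => Φ m ω / m) n ω| ≤ L n + n * (C / m) + D := by
    intro n ω
    have h1 := almost_aux M Φ h B hB n m ω
    have h2 : |Φ n ω - birk M (Φ m) n ω / m| ≤ n * (C / m) + D := by
      have e1 : Φ n ω - birk M (Φ m) n ω / m = (m * Φ n ω - birk M (Φ m) n ω) / m := by
        field_simp
      have e2 : n * (C / m) + D = (n * C + m * C + 2 * ∑ i ∈ Finset.range m, B i) / m := by
        rw [hD]; ring
      rw [e1, e2, abs_div, abs_of_pos hm0]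
      gcongr
    rw [hbirk]
    have h3 := hd n ω
    rw [abs_le] at *
    constructor <;> linarith
  have hlim : Tendsto (fun n : ℕ => L n / n + C / m + D / n) atTop (𝓝 (C / m)) := by
    simpa using (hL.add_const (C / m)).add (tendsto_const_div_atTop_nhds_zero_nat D)
  have hev := hlim.eventually (Iio_mem_nhds hmC)
  refine lt_of_le_of_lt (limsup_le_of_le (a := ε / 2) ?_ ?_) (by linarith)
  · refine IsBoundedUnder.isCoboundedUnder_le (isBoundedUnder_of ⟨0, fun n => ?_⟩)
    exact div_nonneg (Real.iSup_nonneg fun ω => abs_nonneg _) (Nat.cast_nonneg n)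
  · filter_upwards [hev, eventually_gt_atTop 0] with n hn hn0
    have hn0' : (0 : ℝ) < n := by exact_mod_cast hn0
    have hn : L n / n + C / m + D / n < ε / 2 := hn
    refine le_trans ?_ hn.le
    have : L n / n + C / m + D / n = (L n + n * (C / m) + D) / n := by
      field_simp
    rw [this]
    gcongr
    exact ciSup_le (hbd n)

lemma word_cont (M : Matrix (Fin k) (Fin k) ℕ) (n : ℕ) : Continuous (word M n) :=
  continuous_pi fun j => (continuous_apply j.1).comp continuous_subtype_val

end Aux

end WG

open WG in
/-- a weak Gibbs measure for an almost additive sequence of continuous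
functions on a topologically mixing subshift of finite type is a Gibbs measure for some
asymptotically additive sequence `Ψ`. -/
theorem weakGibbs_almostAdd_is_gibbs_for_asympAdd
    {k : ℕ} (M : Matrix (Fin k) (Fin k) ℕ) (hmix : Mixing M)
    (Φ : ℕ → Space M → ℝ) (hcont : ∀ n, Continuous (Φ n))
    (halm : ∃ C > (0 : ℝ), ∀ n m : ℕ, ∀ ω : Space M,
      -C + Φ n ω + Φ m ((shift M)^[n] ω) ≤ Φ (n + m) ω ∧
        Φ (n + m) ω ≤ C + Φ n ω + Φ m ((shift M)^[n] ω))
    (P : ℝ) (hP : IsPressure M Φ P)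
    (μ : Measure (Space M)) (hμ : IsProbabilityMeasure μ)
    (hwg : WeakGibbs M Φ P μ) :
    ∃ Ψ : ℕ → Space M → ℝ, AsympAdd M Ψ ∧ ∃ Q : ℝ, IsPressure M Ψ Q ∧ Gibbs M Ψ Q μ := by
  obtain ⟨C, hC, halm⟩ := halm
  obtain ⟨K, hK, hKlim, hKb⟩ := hwg
  haveI hne : Nonempty (Space M) := by
    by_contra h
    rw [not_nonempty_iff] at h
    have h1 := hμ.measure_univ
    rw [Set.univ_eq_empty_iff.2 h] at h1
    simp at h1
  have hpos : ∀ n (w : Fin n → Fin k), ∀ ω ∈ cyl M n w, 0 < (μ (cyl M n w)).toReal := by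
    intro n w ω hω
    have h1 := lt_of_lt_of_le (one_div_pos.2 (hK n)) (hKb n w ω hω).1
    rwa [div_pos_iff_of_pos_right (Real.exp_pos _)] at h1
  have hmem : ∀ n (ω : Space M), ω ∈ cyl M n (word M n ω) := fun n ω j => rfl
  set Ψ : ℕ → Space M → ℝ := fun n ω =>
    Real.log (μ (cyl M n (word M n ω))).toReal + n * P with hΨ
  have hd : ∀ n ω, |Ψ n ω - Φ n ω| ≤ Real.log (K n) := by
    intro n ω
    obtain ⟨h1, h2⟩ := hKb n _ ω (hmem n ω)
    have hp := hpos n _ ω (hmem n ω)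
    have l1 := Real.log_le_log (one_div_pos.2 (hK n)) h1
    have l2 := Real.log_le_log (div_pos hp (Real.exp_pos _)) h2
    rw [Real.log_div hp.ne' (Real.exp_pos _).ne', Real.log_exp] at l1 l2
    rw [one_div, Real.log_inv] at l1
    simp only [hΨ]
    rw [abs_le]
    constructor <;> linarith
  have hΨc : ∀ n, Continuous (Ψ n) := fun n =>
    (continuous_of_discreteTopology
      (f := fun w : Fin n → Fin k => Real.log (μ (cyl M n w)).toReal + n * P)).comp (word_cont M n)
  refine ⟨Ψ, asymp_aux M Φ Ψ hΨc hcont hC ?_ _ hKlim hd, P, ?_, 1, one_pos, ?_⟩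
  · intro n m ω
    have := halm n m ω
    rw [abs_le]
    constructor <;> linarith [this.1, this.2]
  · unfold IsPressure at hP ⊢
    convert hP using 2 with ε
    refine limsup_aux ?_
    refine squeeze_zero_norm (fun n => ?_) hKlim
    rw [← sub_div, Real.norm_eq_abs, abs_div, Nat.abs_cast]
    gcongr
    exact sepSum_abs M (hd n)
  · intro n w ω hω
    have hw : word M n ω = w := funext hω
    have hp := hpos n w ω hω
    have : Real.exp (Ψ n ω - n * P) = (μ (cyl M n w)).toReal := by
      simp only [hΨ, hw, add_sub_cancel_right]
      exact Real.exp_log hp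
    rw [this, div_self hp.ne']
    simp
end

section
/- Let T be an expanding Markov map of the interval with symbolic representation (Σ,σ) and natural projection π : Σ → Λ, and for each n let D_n : Σ → ℝ be defined by D_n(ω) := diam(I(i₁,…,i_n)), the diameter of the length-n cylinder interval containing π(ω). Then the sequence of functions log D := (log D_n)_n is asymptotically additive on Σ. -/
open MeasureTheory Filter Topology Set

namespace WG

/-- An expanding Markov map of the unit interval, together with its symbolic
representation by the topologically mixing subshift of finite type `(Space M, shift M)`
and the natural projection `π`. -/
structure ExpandingMarkovMap {k : ℕ} (M : Matrix (Fin k) (Fin k) ℕ) where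
  /-- the map -/
  T : ℝ → ℝ
  /-- its derivative -/
  T' : ℝ → ℝ
  /-- left endpoints of the intervals `I_i` -/
  a : Fin k → ℝ
  /-- right endpoints of the intervals `I_i` -/
  b : Fin k → ℝ
  le : ∀ i, a i ≤ b i
  sub : ∀ i, Set.Icc (a i) (b i) ⊆ Set.Icc (0 : ℝ) 1
  disj : ∀ i j, i ≠ j → Disjoint (Set.Icc (a i) (b i)) (Set.Icc (a j) (b j))
  mapsInto : ∀ i, ∀ x ∈ Set.Icc (a i) (b i), T x ∈ Set.Icc (0 : ℝ) 1
  /-- the coding subshift is topologically mixing -/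
  mixing : Mixing M
  /-- `T` is differentiable on `∪ I_i` with continuous derivative `T'` (i.e. `C¹`) -/
  deriv : ∀ x ∈ ⋃ i, Set.Icc (a i) (b i),
    HasDerivWithinAt T (T' x) (⋃ i, Set.Icc (a i) (b i)) x
  derivCont : ContinuousOn T' (⋃ i, Set.Icc (a i) (b i))
  /-- `|T'| ≥ 1` on `∪ I_i` -/
  expanding : ∀ x ∈ ⋃ i, Set.Icc (a i) (b i), 1 ≤ |T' x|
  /-- at most finitely many points where `|T'| = 1` -/
  finiteNonHyp : {x ∈ ⋃ i, Set.Icc (a i) (b i) | |T' x| = 1}.Finite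
  /-- the natural projection `π : Σ → Λ` -/
  proj : Space M → ℝ
  projCont : Continuous proj
  projInj : Function.Injective proj
  /-- conjugacy `π ∘ σ = T ∘ π` -/
  projConj : ∀ ω : Space M, proj (shift M ω) = T (proj ω)
  /-- `π` sends the cylinder `[i]` into the interval `I_i` -/
  projCode : ∀ ω : Space M, proj ω ∈ Set.Icc (a (ω.1 0)) (b (ω.1 0))

variable {k : ℕ} {M : Matrix (Fin k) (Fin k) ℕ}

/-- `D_n(ω)`: the diameter of the projection of the length-`n` cylinder containing `ω`. -/
noncomputable def cylDiam (E : ExpandingMarkovMap M) (n : ℕ) (ω : Space M) : ℝ :=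
  Metric.diam (E.proj '' cyl M n (word M n ω))

/-- The entropy partition sum `H_n(ν) = −∑_w ν(C_w) log ν(C_w)` over words of length `n`.
For an invariant measure, `h(ν) = lim H_n(ν)/n` (the cylinders form a generating
partition), which we use to define the Kolmogorov–Sinai entropy on the shift space. -/
noncomputable def entSum (ν : MeasureTheory.Measure (Space M)) (n : ℕ) : ℝ :=
  -∑ w : Fin n → Fin k, (ν (cyl M n w)).toReal * Real.log ((ν (cyl M n w)).toReal)

/-- The Kolmogorov–Sinai entropy of a shift-invariant measure `ν` on the subshift. -/
noncomputable def KSEntropy (ν : MeasureTheory.Measure (Space M)) : ℝ :=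
  Filter.liminf (fun n : ℕ => entSum ν n / n) Filter.atTop

end WG

namespace WG

variable {k : ℕ} {M : Matrix (Fin k) (Fin k) ℕ}

instance compactSpace_space (M : Matrix (Fin k) (Fin k) ℕ) : CompactSpace (Space M) := by
  apply isCompact_iff_compactSpace.mp
  apply IsClosed.isCompact
  have : {ω : ℕ → Fin k | ∀ i : ℕ, M (ω i) (ω (i + 1)) = 1}
      = ⋂ i : ℕ, (fun ω : ℕ → Fin k => (ω i, ω (i + 1))) ⁻¹' {p | M p.1 p.2 = 1} := by
    ext ω; simp
  change IsClosed {ω : ℕ → Fin k | ∀ i : ℕ, M (ω i) (ω (i + 1)) = 1}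
  rw [this]
  refine isClosed_iInter fun i => IsClosed.preimage (by fun_prop) (isClosed_discrete _)

/-- Cylinder around a point. -/
def cy (M : Matrix (Fin k) (Fin k) ℕ) (n : ℕ) (ω : Space M) : Set (Space M) :=
  {κ | ∀ j < n, κ.1 j = ω.1 j}

lemma cyl_eq (n : ℕ) (ω : Space M) : cyl M n (word M n ω) = cy M n ω := by
  ext κ
  simp only [cyl, word, cy, Set.mem_setOf_eq]
  exact ⟨fun h j hj => h ⟨j, hj⟩, fun h j => h j.1 j.2⟩

lemma cy_mem (n : ℕ) (ω : Space M) : ω ∈ cy M n ω := fun _ _ => rfl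

lemma cy_congr {n : ℕ} {ω κ : Space M} (h : κ ∈ cy M n ω) : cy M n κ = cy M n ω := by
  ext τ
  exact ⟨fun h' j hj => (h' j hj).trans (h j hj), fun h' j hj => (h' j hj).trans (h j hj).symm⟩

lemma cy_anti {n m : ℕ} (h : n ≤ m) (ω : Space M) : cy M m ω ⊆ cy M n ω :=
  fun _ h' j hj => h' j (hj.trans_le h)

lemma cy_open (n : ℕ) (ω : Space M) : IsOpen (cy M n ω) := by
  have : cy M n ω = ⋂ j ∈ Set.Iio n, (fun κ : Space M => κ.1 j) ⁻¹' {ω.1 j} := by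
    ext κ; simp [cy]
  rw [this]
  refine (Set.finite_Iio n).isOpen_biInter fun j _ => ?_
  exact (isOpen_discrete _).preimage ((continuous_apply j).comp continuous_subtype_val)

lemma cy_basis (ω : Space M) (U : Set (Space M)) (hU : U ∈ 𝓝 ω) : ∃ n, cy M n ω ⊆ U := by
  obtain ⟨V, hVU, hV, hω⟩ := mem_nhds_iff.mp hU
  obtain ⟨W, hW, rfl⟩ := isOpen_induced_iff.mp hV
  obtain ⟨I, u, h1, h2⟩ := isOpen_pi_iff.mp hW ω.1 hω
  refine ⟨I.sup id + 1, fun κ hκ => hVU (h2 ?_)⟩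
  intro i hi
  have : i ≤ I.sup id := Finset.le_sup (f := id) hi
  rw [hκ i (by omega)]
  exact (h1 i hi).2

lemma shift_cont : Continuous (shift M) := by
  unfold shift
  refine Continuous.subtype_mk ?_ _
  refine continuous_pi fun i => ?_
  exact (continuous_apply (i+1)).comp continuous_subtype_val

lemma birk_cont {f : Space M → ℝ} (hf : Continuous f) (n : ℕ) : Continuous (birk M f n) := by
  unfold birk
  exact continuous_finsetSum _ fun j _ => hf.comp (shift_cont.iterate j)

lemma birk_succ (f : Space M → ℝ) (n : ℕ) (ω : Space M) :
    birk M f (n+1) ω = f ω + birk M f n (shift M ω) := by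
  unfold birk
  rw [Finset.sum_range_succ']
  simp [add_comm]

/-- abstract criterion -/
lemma limsup_crit (Φ : ℕ → Space M → ℝ) (hΦ : ∀ n, Continuous (Φ n)) (ρ : Space M → ℝ)
    (hρ : Continuous ρ)
    (h : ∀ η > (0:ℝ), ∃ N : ℕ, ∀ n ≥ N, ∀ ω, |Φ (n+1) ω - Φ n (shift M ω) - ρ ω| ≤ η)
    (ε : ℝ) (hε : 0 < ε) :
    limsup (fun n : ℕ => (⨆ ω : Space M, |Φ n ω - birk M ρ n ω|) / n) atTop < ε := by
  obtain ⟨N, hN⟩ := h (ε/4) (by positivity)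
  have hc : Continuous fun ω => |Φ N ω - birk M ρ N ω| := ((hΦ N).sub (birk_cont hρ N)).abs
  obtain ⟨C, hC⟩ := (isCompact_range hc).bddAbove
  have hC' : ∀ ω, |Φ N ω - birk M ρ N ω| ≤ C := fun ω => hC ⟨ω, rfl⟩
  have key : ∀ m : ℕ, ∀ ω, |Φ (N+m) ω - birk M ρ (N+m) ω| ≤ C + m * (ε/4) := by
    intro m
    induction m with
    | zero => intro ω; simpa using hC' ω
    | succ m ih =>
      intro ω
      rw [← add_assoc, birk_succ]
      have h1 := hN (N+m) (by omega) ω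
      have h2 := ih (shift M ω)
      rw [abs_le] at *
      push_cast
      constructor <;> linarith
  have hle : limsup (fun n : ℕ => (⨆ ω : Space M, |Φ n ω - birk M ρ n ω|) / n) atTop
      ≤ ε / 2 := by
    refine limsup_le_of_le ?_ ?_
    · refine IsCoboundedUnder.of_frequently_ge (a := 0) (Eventually.frequently ?_)
      refine Eventually.of_forall fun n => ?_
      exact div_nonneg (Real.iSup_nonneg fun _ => abs_nonneg _) (Nat.cast_nonneg _)
    · have h1 : ∀ᶠ n : ℕ in atTop, |C| * 4 / ε ≤ n :=
        tendsto_natCast_atTop_atTop.eventually_ge_atTop _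
      filter_upwards [h1, eventually_ge_atTop N, eventually_gt_atTop 0] with n h1 h2 h3
      have h3' : (0:ℝ) < n := by exact_mod_cast h3
      rw [div_le_iff₀ h3']
      rw [div_le_iff₀ hε] at h1
      refine Real.iSup_le (fun ω => ?_) (by positivity)
      obtain ⟨m, rfl⟩ := Nat.exists_eq_add_of_le h2
      refine (key m ω).trans ?_
      push_cast at *
      have := le_abs_self C
      have : (0:ℝ) ≤ N := Nat.cast_nonneg _
      nlinarith
  linarith

/-- Prepend a letter. -/
def cons (i : Fin k) (ω : Space M) (h : M i (ω.1 0) = 1) : Space M :=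
  ⟨fun n => Nat.casesOn n i ω.1, fun n => by cases n with
    | zero => exact h
    | succ n => exact ω.2 n⟩

lemma shift_cons (i : Fin k) (ω : Space M) (h : M i (ω.1 0) = 1) :
    shift M (cons i ω h) = ω := rfl

lemma exists_pre (hM : Mixing M) (l : ℕ) (ω : Space M) (i : Fin k)
    (h : 0 < (M ^ l) i (ω.1 0)) : ∃ τ : Space M, τ.1 0 = i ∧ (shift M)^[l] τ = ω := by
  induction l generalizing i with
  | zero =>
    refine ⟨ω, ?_, rfl⟩
    by_contra hne
    rw [pow_zero, Matrix.one_apply_ne (Ne.symm hne)] at h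
    exact lt_irrefl _ h
  | succ l ih =>
    rw [pow_succ', Matrix.mul_apply] at h
    obtain ⟨m, -, hm⟩ := Finset.exists_ne_zero_of_sum_ne_zero h.ne'
    have h1 := left_ne_zero_of_mul hm
    have h2 := right_ne_zero_of_mul hm
    obtain ⟨τ, hτ, hτ'⟩ := ih m (Nat.pos_of_ne_zero h2)
    have h3 : M i (τ.1 0) = 1 := by
      rw [hτ]; exact (hM.1 i m).resolve_left h1
    exact ⟨cons i τ h3, rfl, by rw [Function.iterate_succ_apply, shift_cons, hτ']⟩

lemma cy_one_nontrivial (hM : Mixing M) (hn : Nontrivial (Space M)) (ω : Space M) :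
    (cy M 1 ω).Nontrivial := by
  obtain ⟨p, q, hpq⟩ := hn
  obtain ⟨l, -, hl⟩ := hM.2
  obtain ⟨τ, h1, h2⟩ := exists_pre hM l p (ω.1 0) (hl _ _)
  obtain ⟨τ', h1', h2'⟩ := exists_pre hM l q (ω.1 0) (hl _ _)
  refine ⟨τ, ?_, τ', ?_, ?_⟩
  · intro j hj
    obtain rfl : j = 0 := by omega
    exact h1
  · intro j hj
    obtain rfl : j = 0 := by omega
    exact h1'
  · rintro rfl
    exact hpq (h2.symm.trans h2')

variable (E : ExpandingMarkovMap M)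

lemma cylDiam_eq (n : ℕ) (ω : Space M) : cylDiam E n ω = Metric.diam (E.proj '' cy M n ω) := by
  rw [cylDiam, cyl_eq]

lemma bdd (n : ℕ) (ω : Space M) : Bornology.IsBounded (E.proj '' cy M n ω) :=
  (isCompact_range E.projCont).isBounded.subset (Set.image_subset_range _ _)

lemma le_diam {n : ℕ} {ω x y : Space M} (hx : x ∈ cy M n ω) (hy : y ∈ cy M n ω) :
    |E.proj x - E.proj y| ≤ cylDiam E n ω := by
  rw [cylDiam_eq, ← Real.dist_eq]
  exact Metric.dist_le_diam_of_mem (bdd E n ω) ⟨x, hx, rfl⟩ ⟨y, hy, rfl⟩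

lemma diam_le {n : ℕ} {ω : Space M} {C : ℝ} (hC : 0 ≤ C)
    (h : ∀ x ∈ cy M n ω, ∀ y ∈ cy M n ω, |E.proj x - E.proj y| ≤ C) : cylDiam E n ω ≤ C := by
  rw [cylDiam_eq]
  refine Metric.diam_le_of_forall_dist_le hC ?_
  rintro _ ⟨x, hx, rfl⟩ _ ⟨y, hy, rfl⟩
  rw [Real.dist_eq]
  exact h x hx y hy

lemma diam_nonneg (n : ℕ) (ω : Space M) : 0 ≤ cylDiam E n ω := Metric.diam_nonneg

lemma logDiam_cont (n : ℕ) : Continuous (fun ω => Real.log (cylDiam E n ω)) := by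
  refine IsLocallyConstant.continuous ?_
  rw [IsLocallyConstant.iff_exists_open]
  intro ω
  refine ⟨cy M n ω, cy_open n ω, cy_mem n ω, fun κ hκ => ?_⟩
  rw [cylDiam_eq, cylDiam_eq, cy_congr hκ]

lemma diam_small (δ : ℝ) (hδ : 0 < δ) : ∃ N, ∀ n ≥ N, ∀ ω, cylDiam E n ω < δ := by
  have h : ∀ ω : Space M, ∃ n, cy M n ω ⊆ E.proj ⁻¹' Metric.ball (E.proj ω) (δ/4) := fun ω =>
    cy_basis ω _ (E.projCont.continuousAt.preimage_mem_nhds (Metric.ball_mem_nhds _ (by positivity)))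
  choose f hf using h
  obtain ⟨t, ht⟩ := CompactSpace.elim_nhds_subcover (fun ω => cy M (f ω) ω)
    (fun ω => (cy_open _ ω).mem_nhds (cy_mem _ ω))
  refine ⟨t.sup f, fun n hn ω => ?_⟩
  have hω : ω ∈ ⋃ x ∈ t, cy M (f x) x := by rw [ht]; trivial
  simp only [Set.mem_iUnion] at hω
  obtain ⟨κ, hκ, hωκ⟩ := hω
  have hle : f κ ≤ n := (Finset.le_sup hκ).trans hn
  have hsub : cy M n ω ⊆ cy M (f κ) κ := (cy_anti hle ω).trans (cy_congr hωκ).subset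
  refine (diam_le E (C := δ/2) (by positivity) fun x hx y hy => ?_).trans_lt (by linarith)
  have h1 := hf κ (hsub hx)
  have h2 := hf κ (hsub hy)
  simp only [Set.mem_preimage, Metric.mem_ball, Real.dist_eq, abs_lt] at h1 h2
  rw [abs_le]; constructor <;> linarith [h1.1, h1.2, h2.1, h2.2]

lemma mvt (i : Fin k) (x y : ℝ) (hx : x ∈ Set.Icc (E.a i) (E.b i))
    (hy : y ∈ Set.Icc (E.a i) (E.b i)) :
    ∃ ξ ∈ Set.uIcc x y, |E.T x - E.T y| = |E.T' ξ| * |x - y| := by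
  wlog hxy : x ≤ y generalizing x y
  · obtain ⟨ξ, h1, h2⟩ := this y x hy hx (le_of_not_ge hxy)
    exact ⟨ξ, by rwa [Set.uIcc_comm], by rw [abs_sub_comm, h2, abs_sub_comm y x]⟩
  rcases hxy.eq_or_lt with rfl | hlt
  · exact ⟨x, by simp, by simp⟩
  have hsub : Set.Icc x y ⊆ ⋃ i, Set.Icc (E.a i) (E.b i) := fun z hz =>
    Set.mem_iUnion.2 ⟨i, hx.1.trans hz.1, hz.2.trans hy.2⟩
  have hd : ∀ z ∈ Set.Icc x y, HasDerivWithinAt E.T (E.T' z) (Set.Icc x y) z := fun z hz =>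
    (E.deriv z (hsub hz)).mono hsub
  obtain ⟨c, hc, h⟩ := exists_hasDerivAt_eq_slope E.T E.T' hlt
    (fun z hz => (hd z hz).continuousWithinAt)
    (fun z hz => (hd z (Set.Ioo_subset_Icc_self hz)).hasDerivAt (Icc_mem_nhds hz.1 hz.2))
  refine ⟨c, by rw [Set.uIcc_of_le hxy]; exact Set.Ioo_subset_Icc_self hc, ?_⟩
  have h0 : y - x ≠ 0 := sub_ne_zero.2 hlt.ne'
  rw [h, ← abs_mul]
  congr 1
  rw [← neg_sub y x, mul_neg, div_mul_cancel₀ _ h0, neg_sub]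

lemma shift_mem {n : ℕ} {ω x : Space M} (hx : x ∈ cy M (n+1) ω) :
    shift M x ∈ cy M n (shift M ω) := fun j hj => hx (j+1) (by omega)

lemma exists_lift {n : ℕ} (hn : 1 ≤ n) {ω x : Space M} (hx : x ∈ cy M n (shift M ω)) :
    ∃ y ∈ cy M (n+1) ω, shift M y = x := by
  have h : M (ω.1 0) (x.1 0) = 1 := by
    rw [hx 0 (by omega)]; exact ω.2 0
  refine ⟨cons (ω.1 0) x h, fun j hj => ?_, rfl⟩
  cases j with
  | zero => rfl
  | succ j => exact hx j (by omega)

lemma proj_mem (ω : Space M) : E.proj ω ∈ ⋃ i, Set.Icc (E.a i) (E.b i) :=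
  Set.mem_iUnion.2 ⟨_, E.projCode ω⟩

lemma g_contOn : ContinuousOn (fun x => Real.log |E.T' x|) (⋃ i, Set.Icc (E.a i) (E.b i)) := by
  refine ContinuousOn.log E.derivCont.abs fun x hx => ?_
  have := E.expanding x hx
  positivity

lemma step (η : ℝ) (hη : 0 < η) : ∃ N, ∀ n ≥ N, ∀ ω : Space M,
    ∀ x ∈ cy M (n+1) ω, ∀ y ∈ cy M (n+1) ω,
    |E.proj (shift M x) - E.proj (shift M y)| ≤
      Real.exp (Real.log |E.T' (E.proj ω)| + η) * |E.proj x - E.proj y| ∧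
    Real.exp (Real.log |E.T' (E.proj ω)| - η) * |E.proj x - E.proj y| ≤
      |E.proj (shift M x) - E.proj (shift M y)| := by
  have hK : IsCompact (⋃ i, Set.Icc (E.a i) (E.b i)) := isCompact_iUnion fun i => isCompact_Icc
  have hu := hK.uniformContinuousOn_of_continuous (g_contOn E)
  rw [Metric.uniformContinuousOn_iff] at hu
  obtain ⟨δ, hδ, hu⟩ := hu η hη
  obtain ⟨N, hN⟩ := diam_small E δ hδ
  refine ⟨N, fun n hn ω x hx y hy => ?_⟩
  have hX : E.proj x ∈ Set.Icc (E.a (ω.1 0)) (E.b (ω.1 0)) := by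
    have := E.projCode x; rwa [hx 0 (by omega)] at this
  have hY : E.proj y ∈ Set.Icc (E.a (ω.1 0)) (E.b (ω.1 0)) := by
    have := E.projCode y; rwa [hy 0 (by omega)] at this
  obtain ⟨ξ, hξ, h⟩ := mvt E _ _ _ hX hY
  have hξ' : ξ ∈ ⋃ i, Set.Icc (E.a i) (E.b i) :=
    Set.mem_iUnion.2 ⟨_, Set.uIcc_subset_Icc hX hY hξ⟩
  have hd : dist ξ (E.proj ω) < δ := by
    have h1 := (le_diam E hx (cy_mem _ ω)).trans_lt (hN (n+1) (by omega) ω)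
    have h2 := (le_diam E hy (cy_mem _ ω)).trans_lt (hN (n+1) (by omega) ω)
    rw [← Real.dist_eq, ← Metric.mem_ball] at h1 h2
    have : (Metric.ball (E.proj ω) δ).OrdConnected := by
      rw [Real.ball_eq_Ioo]; infer_instance
    exact this.uIcc_subset h1 h2 hξ
  have hg := hu ξ hξ' _ (proj_mem E ω) hd
  rw [Real.dist_eq, abs_lt] at hg
  have hpos : 0 < |E.T' ξ| := lt_of_lt_of_le one_pos (E.expanding ξ hξ')
  rw [E.projConj, E.projConj, h]
  constructor
  · refine mul_le_mul_of_nonneg_right ?_ (abs_nonneg _)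
    rw [← Real.log_le_iff_le_exp hpos]; linarith [hg.2]
  · refine mul_le_mul_of_nonneg_right ?_ (abs_nonneg _)
    rw [← Real.le_log_iff_exp_le hpos]; linarith [hg.1]

lemma diam_pos (hn : Nontrivial (Space M)) (n : ℕ) (hn1 : 1 ≤ n) (ω : Space M) :
    0 < cylDiam E n ω := by
  have aux : (cy M n ω).Nontrivial := by
    induction n, hn1 using Nat.le_induction generalizing ω with
    | base => exact cy_one_nontrivial E.mixing hn ω
    | succ n hn1 ih =>
      obtain ⟨x, hx, y, hy, hxy⟩ := ih (shift M ω)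
      obtain ⟨x', hx', rfl⟩ := exists_lift hn1 hx
      obtain ⟨y', hy', rfl⟩ := exists_lift hn1 hy
      exact ⟨x', hx', y', hy', fun h => hxy (by rw [h])⟩
  obtain ⟨x, hx, y, hy, hxy⟩ := aux
  refine lt_of_lt_of_le ?_ (le_diam E hx hy)
  exact abs_pos.2 (sub_ne_zero.2 fun h => hxy (E.projInj h))

lemma main_step (hn : Nontrivial (Space M)) (η : ℝ) (hη : 0 < η) : ∃ N : ℕ, ∀ n ≥ N,
    ∀ ω : Space M, |Real.log (cylDiam E (n+1) ω) - Real.log (cylDiam E n (shift M ω))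
      - (-Real.log |E.T' (E.proj ω)|)| ≤ η := by
  obtain ⟨N, hN⟩ := step E η hη
  refine ⟨N + 1, fun n hn' ω => ?_⟩
  have hs := hN n (by omega) ω
  have p1 := diam_pos E hn (n+1) (by omega) ω
  have p2 := diam_pos E hn n (by omega) (shift M ω)
  set g := Real.log |E.T' (E.proj ω)|
  have u1 : cylDiam E n (shift M ω) ≤ Real.exp (g + η) * cylDiam E (n+1) ω := by
    refine diam_le E (by positivity) fun x hx y hy => ?_
    obtain ⟨x', hx', rfl⟩ := exists_lift (by omega) hx
    obtain ⟨y', hy', rfl⟩ := exists_lift (by omega) hy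
    refine (hs x' hx' y' hy').1.trans ?_
    gcongr
    exact le_diam E hx' hy'
  have u2 : cylDiam E (n+1) ω ≤ Real.exp (-(g - η)) * cylDiam E n (shift M ω) := by
    refine diam_le E (by positivity) fun x hx y hy => ?_
    have h1 := (hs x hx y hy).2.trans (le_diam E (shift_mem hx) (shift_mem hy))
    rw [Real.exp_neg, ← div_eq_inv_mul, le_div_iff₀ (Real.exp_pos _), mul_comm]
    exact h1
  have l1 := Real.log_le_log p2 u1
  have l2 := Real.log_le_log p1 u2
  rw [Real.log_mul (Real.exp_ne_zero _) p1.ne', Real.log_exp] at l1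
  rw [Real.log_mul (Real.exp_ne_zero _) p2.ne', Real.log_exp] at l2
  rw [abs_le]; constructor <;> linarith

end WG

open WG in
/-- Urbański, Jordan–Rams: for an expanding Markov map `T` with symbolic
representation `(Σ,σ)` and natural projection `π`, the sequence `log D = (log D_n)_n`,
where `D_n(ω)` is the diameter of the length-`n` cylinder interval containing `π(ω)`,
is asymptotically additive on `Σ`. -/
theorem logDiam_asympAdd
    {k : ℕ} (M : Matrix (Fin k) (Fin k) ℕ) (E : ExpandingMarkovMap M) :
    AsympAdd M (fun n ω => Real.log (cylDiam E n ω)) := by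
  refine ⟨logDiam_cont E, fun ε hε => ?_⟩
  rcases subsingleton_or_nontrivial (Space M) with hs | hn
  · refine ⟨fun _ => 0, continuous_const, ?_⟩
    refine limsup_crit _ (logDiam_cont E) _ continuous_const ?_ ε hε
    intro η hη
    refine ⟨0, fun n _ ω => ?_⟩
    have : ∀ m κ, cylDiam E m κ = 0 := fun m κ =>
      Metric.diam_subsingleton ((Set.subsingleton_of_subsingleton).image _)
    simp only [this]
    simpa using hη.le
  · refine ⟨fun ω => -Real.log |E.T' (E.proj ω)|, ?_, ?_⟩
    · exact ((g_contOn E).comp_continuous E.projCont (proj_mem E)).neg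
    · refine limsup_crit _ (logDiam_cont E) _ ?_ (main_step E hn) ε hε
      exact ((g_contOn E).comp_continuous E.projCont (proj_mem E)).neg
end
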